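/- Let p be a prime and let r, m, e be positive integers with m ≥ r+2 and e ≥ 2. Writing ‖C‖ for the maximum entry and |C| for the minimum entry of a matrix C, one has (m−r−1)^{e−1} · |Y_0| · |U|^{e−2} · |X_0| ≤ c_{p,r,m,e} ≤ (m−r−1)^{e−1} · ‖Y_0‖ · ‖U‖^{e−2} · ‖X_0‖, where U = U(p,r,m) is the determining matrix and X_0, Y_0 are the associated column and row vectors. -/

import Mathlib

/-- `cSeq p r m e` is the number of `m`-tuples `(a_1,…,a_m)` of natural numbers with
`a_1+⋯+a_m = r(p^e−1)` such that `(a_1 mod p^i)+⋯+(a_m mod p^i) ≥ r(p^i−1)+p^i`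
for every `1 ≤ i ≤ e−1`; this is the `e`-th term of the complexity sequence of
the ring `T(V_r(K[x_1,…,x_m]))` of Enescu–Yao. -/
noncomputable def cSeq (p r m e : ℕ) : ℕ :=
  Nat.card {a : Fin m → ℕ // (∑ j, a j = r * (p ^ e - 1)) ∧
    ∀ i, 1 ≤ i → i ≤ e - 1 → r * (p ^ i - 1) + p ^ i ≤ ∑ j, a j % p ^ i}


/-- `Mpm p m i` is the number of `m`-tuples `(b_1,…,b_m)` of integers with
`0 ≤ b_j ≤ p−1` and `b_1+⋯+b_m = i`; it is the coefficient of `t^i` in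
`(1+t+⋯+t^{p−1})^m`. -/
def Mpm (p m : ℕ) (i : ℤ) : ℕ :=
  (Finset.univ.filter (fun b : Fin m → Fin p => (∑ j, ((b j : ℕ) : ℤ)) = i)).card


/-- `Pm m k = binom(k+m−1, m−1)` for `k ≥ 0`, and `0` for `k < 0`. -/
def Pm (m : ℕ) (k : ℤ) : ℕ :=
  if 0 ≤ k then (k.toNat + m - 1).choose (m - 1) else 0


/-- The minimum entry `|U|` of the determining matrix `U(p,r,m)`, whose entries are
`M_{p,m}(r(p−1)+ip−j)` for `1 ≤ i,j ≤ m−r−1`. -/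
noncomputable def minU (p r m : ℕ) : ℕ :=
  sInf {x : ℕ | ∃ i ∈ Finset.Icc 1 (m - r - 1), ∃ j ∈ Finset.Icc 1 (m - r - 1),
    x = Mpm p m ((r : ℤ) * (p - 1) + (i : ℤ) * p - (j : ℤ))}

/-- The maximum entry `‖U‖` of the determining matrix `U(p,r,m)`. -/
noncomputable def maxU (p r m : ℕ) : ℕ :=
  sSup {x : ℕ | ∃ i ∈ Finset.Icc 1 (m - r - 1), ∃ j ∈ Finset.Icc 1 (m - r - 1),
    x = Mpm p m ((r : ℤ) * (p - 1) + (i : ℤ) * p - (j : ℤ))}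

/-- The minimum entry `|X_0|` of the column vector `X_0`, whose entries are
`M_{p,m}(r(p−1)+jp)` for `1 ≤ j ≤ m−r−1`. -/
noncomputable def minX0 (p r m : ℕ) : ℕ :=
  sInf {x : ℕ | ∃ j ∈ Finset.Icc 1 (m - r - 1),
    x = Mpm p m ((r : ℤ) * (p - 1) + (j : ℤ) * p)}

/-- The maximum entry `‖X_0‖` of the column vector `X_0`. -/
noncomputable def maxX0 (p r m : ℕ) : ℕ :=
  sSup {x : ℕ | ∃ j ∈ Finset.Icc 1 (m - r - 1),
    x = Mpm p m ((r : ℤ) * (p - 1) + (j : ℤ) * p)}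

/-- The minimum entry `|Y_0|` of the row vector `Y_0`, whose entries are
`P_m(r(p−1)−n)` for `1 ≤ n ≤ m−r−1`. -/
noncomputable def minY0 (p r m : ℕ) : ℕ :=
  sInf {x : ℕ | ∃ n ∈ Finset.Icc 1 (m - r - 1),
    x = Pm m ((r : ℤ) * (p - 1) - (n : ℤ))}

/-- The maximum entry `‖Y_0‖` of the row vector `Y_0`. -/
noncomputable def maxY0 (p r m : ℕ) : ℕ :=
  sSup {x : ℕ | ∃ n ∈ Finset.Icc 1 (m - r - 1),
    x = Pm m ((r : ℤ) * (p - 1) - (n : ℤ))}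

/-- Tuples `c` with entries `< K` and `∑ c + s = t`. -/
def hiSet (m K s t : ℕ) : Finset (Fin m → ℕ) :=
  (Fintype.piFinset (fun _ => Finset.range K)).filter (fun c => ∑ j, c j + s = t)

/-- Tuples with entries `< p^i * K`, sum `t * p^i - r`, satisfying the conditions up to level `i`. -/
noncomputable def vSet (p r m K i t : ℕ) : Finset (Fin m → ℕ) := by
  classical
  exact (Fintype.piFinset (fun _ => Finset.range (p ^ i * K))).filter
    (fun a => ∑ j, a j + r = t * p ^ i ∧
      ∀ k, 1 ≤ k → k ≤ i → (r + 1) * p ^ k ≤ ∑ j, a j % p ^ k + r)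

theorem mem_hiSet {m K s t : ℕ} {c : Fin m → ℕ} :
    c ∈ hiSet m K s t ↔ (∀ j, c j < K) ∧ ∑ j, c j + s = t := by
  simp [hiSet]

theorem mem_vSet {p r m K i t : ℕ} {a : Fin m → ℕ} :
    a ∈ vSet p r m K i t ↔ (∀ j, a j < p ^ i * K) ∧ ∑ j, a j + r = t * p ^ i ∧
      ∀ k, 1 ≤ k → k ≤ i → (r + 1) * p ^ k ≤ ∑ j, a j % p ^ k + r := by
  simp [vSet]

theorem vSet_zero (p r m K t : ℕ) : vSet p r m K 0 t = hiSet m K r t := by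
  ext a
  rw [mem_vSet, mem_hiSet]
  simp only [pow_zero, one_mul, mul_one]
  constructor
  · rintro ⟨h1, h2, -⟩
    exact ⟨h1, h2⟩
  · rintro ⟨h1, h2⟩
    exact ⟨h1, h2, fun k hk hk' => by omega⟩

theorem sum_split (m q : ℕ) (a : Fin m → ℕ) :
    ∑ j, a j = ∑ j, a j % q + q * ∑ j, a j / q := by
  rw [Finset.mul_sum, ← Finset.sum_add_distrib]
  exact Finset.sum_congr rfl fun j _ => (Nat.mod_add_div _ _).symm

theorem vSet_succ (p r m K i t : ℕ) (hp : p.Prime) (hr : 0 < r) (hm : r + 2 ≤ m) :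
    (vSet p r m K (i + 1) t).card =
      ∑ n ∈ Finset.Icc 1 (m - r - 1),
        (vSet p r m p i (r * p + n * p)).card * (hiSet m K (r + n) t).card := by
  classical
  have hq : 0 < p ^ (i + 1) := pow_pos hp.pos _
  set q := p ^ (i + 1) with hqdef
  -- for members, the low part is determined by `n`
  have key : ∀ a ∈ vSet p r m K (i + 1) t, ∃ n, 1 ≤ n ∧ n ≤ m - r - 1 ∧
      ∑ j, a j % q + r = (r + n) * q := by
    intro a ha
    obtain ⟨h1, h2, h3⟩ := mem_vSet.1 ha
    have h4 := h3 (i + 1) (by omega) le_rfl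
    rw [← hqdef] at h2 h4
    rw [sum_split m q a] at h2
    have hd : q ∣ ∑ j, a j % q + r := by
      have h5 : q ∣ (∑ j, a j % q + r) + q * ∑ j, a j / q := ⟨t, by linarith⟩
      exact (Nat.dvd_add_left (dvd_mul_right _ _)).1 h5
    obtain ⟨w, hw⟩ := hd
    have hw1 : r + 1 ≤ w := by
      rw [hw, mul_comm q w] at h4
      exact Nat.le_of_mul_le_mul_right h4 hq
    have hle : ∑ j, a j % q + m ≤ m * q := by
      have : ∑ j : Fin m, (a j % q + 1) ≤ ∑ j : Fin m, q :=
        Finset.sum_le_sum fun j _ => Nat.mod_lt _ hq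
      simpa [Finset.sum_add_distrib] using this
    have hw2 : w < m := by
      by_contra hcon
      push Not at hcon
      have : m * q ≤ w * q := Nat.mul_le_mul_right _ hcon
      rw [mul_comm q w] at hw
      omega
    refine ⟨w - r, by omega, by omega, ?_⟩
    rw [hw, show r + (w - r) = w by omega, mul_comm]
  have hf : ∀ (a : Fin m → ℕ) (n : ℕ), ∑ j : Fin m, a j % q + r = (r + n) * q →
      (∑ j : Fin m, a j % q + r) / q - r = n := by
    intro a n h
    rw [h, Nat.mul_div_cancel _ hq]
    omega
  rw [Finset.card_eq_sum_card_fiberwise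
    (f := fun a : Fin m → ℕ => (∑ j, a j % q + r) / q - r) (t := Finset.Icc 1 (m - r - 1))]
  swap
  · intro a ha
    obtain ⟨n, h1, h2, h3⟩ := key a ha
    simp only [hf a n h3]
    simp [h1, h2]
  refine Finset.sum_congr rfl fun n hn => ?_
  rw [← Finset.card_product]
  obtain ⟨hn1, hn2⟩ := Finset.mem_Icc.1 hn
  have hqq : p ^ i * p = q := by rw [hqdef, pow_succ]
  refine Finset.card_nbij' (fun a => (fun j => a j % q, fun j => a j / q))
    (fun x j => x.1 j + q * x.2 j) ?_ ?_ ?_ ?_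
  · intro a ha
    simp only [Finset.coe_filter, Set.mem_setOf_eq] at ha
    obtain ⟨ha, hfa⟩ := ha
    obtain ⟨n', h1, h2, h3⟩ := key a ha
    rw [hf a n' h3] at hfa
    subst hfa
    obtain ⟨g1, g2, g3⟩ := mem_vSet.1 ha
    simp only [Finset.coe_product, Set.mem_prod, Finset.mem_coe, mem_vSet, mem_hiSet]
    refine ⟨⟨fun j => ?_, ?_, ?_⟩, fun j => ?_, ?_⟩
    · rw [hqq]; exact Nat.mod_lt _ hq
    · rw [h3, ← hqq]; ring
    · intro k hk hk'
      have := g3 k hk (by omega)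
      simpa [Nat.mod_mod_of_dvd _ (show p ^ k ∣ q from pow_dvd_pow p (by omega))] using this
    · exact Nat.div_lt_of_lt_mul (g1 j)
    · rw [← hqdef, sum_split m q a] at g2
      apply Nat.eq_of_mul_eq_mul_right hq
      nlinarith
  · rintro ⟨b, c⟩ hx
    simp only [Finset.coe_product, Set.mem_prod, Finset.mem_coe, mem_vSet, mem_hiSet, hqq] at hx
    obtain ⟨⟨b1, b2, b3⟩, c1, c2⟩ := hx
    have hmod : ∀ j, (b j + q * c j) % q = b j := fun j => by
      rw [Nat.add_mul_mod_self_left, Nat.mod_eq_of_lt (b1 j)]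
    have hb : ∑ j, b j + r = (r + n) * q := by rw [b2, ← hqq]; ring
    simp only [Finset.coe_filter, Set.mem_setOf_eq, mem_vSet, ← hqdef]
    refine ⟨⟨fun j => ?_, ?_, ?_⟩, ?_⟩
    · have h1 := b1 j
      have h2 : q * (c j + 1) ≤ q * K := Nat.mul_le_mul_left _ (c1 j)
      rw [mul_add] at h2
      omega
    · rw [Finset.sum_add_distrib, ← Finset.mul_sum, ← c2]
      nlinarith
    · intro k hk hk'
      have hkq : p ^ k ∣ q := pow_dvd_pow p (by omega)
      have e1 : ∀ j, (b j + q * c j) % p ^ k = b j % p ^ k := fun j => by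
        rw [← Nat.mod_mod_of_dvd (b j + q * c j) hkq, hmod]
      simp only [e1]
      rcases Nat.lt_or_ge i k with h | h
      · have : k = i + 1 := by omega
        subst this
        rw [← hqdef]
        simp only [Nat.mod_eq_of_lt (b1 _)]
        rw [hb]
        exact Nat.mul_le_mul_right _ (by omega)
      · exact b3 k hk h
    · apply hf (fun j => b j + q * c j) n
      simp only [hmod]
      exact hb
  · intro a _
    funext j
    exact Nat.mod_add_div _ _
  · rintro ⟨b, c⟩ hx
    simp only [Finset.coe_product, Set.mem_prod, Finset.mem_coe, mem_vSet, mem_hiSet, hqq] at hx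
    obtain ⟨⟨b1, b2, b3⟩, c1, c2⟩ := hx
    refine Prod.ext (funext fun j => ?_) (funext fun j => ?_)
    · simp only
      rw [Nat.add_mul_mod_self_left, Nat.mod_eq_of_lt (b1 j)]
    · simp only
      rw [Nat.add_mul_div_left _ _ hq, Nat.div_eq_of_lt (b1 j), zero_add]

theorem card_hiSet_p (p m s t : ℕ) : (hiSet m p s t).card = Mpm p m ((t : ℤ) - s) := by
  unfold Mpm
  symm
  refine Finset.card_bij (fun b _ j => (b j : ℕ)) ?_ ?_ ?_
  · intro b hb
    simp only [Finset.mem_filter, Finset.mem_univ, true_and] at hb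
    rw [mem_hiSet]
    refine ⟨fun j => (b j).2, ?_⟩
    zify
    linarith
  · intro b _ b' _ h
    funext j
    exact Fin.ext (congrFun h j)
  · intro c hc
    obtain ⟨h1, h2⟩ := mem_hiSet.1 hc
    refine ⟨fun j => ⟨c j, h1 j⟩, ?_, rfl⟩
    simp only [Finset.mem_filter, Finset.mem_univ, true_and]
    zify at h2
    linarith

theorem card_hiSet_big (m K s t : ℕ) (hm : 0 < m) (hK : t < K) :
    (hiSet m K s t).card = Pm m ((t : ℤ) - s) := by
  classical
  unfold Pm
  split_ifs with h
  · obtain ⟨d, rfl⟩ : ∃ d, t = d + s := ⟨t - s, by omega⟩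
    have e1 : (((d + s : ℕ) : ℤ) - s).toNat = d := by push_cast; simp
    rw [e1]
    have h2 := Finset.card_finsuppAntidiag_nat_eq_choose (s := (Finset.univ : Finset (Fin m))) d
    rw [Finset.card_univ, Fintype.card_fin] at h2
    rw [show d + m - 1 = d + (m - 1) by omega, ← Nat.choose_symm_add,
      show d + (m - 1) = m + d - 1 by omega, ← h2]
    symm
    refine Finset.card_bij (fun f _ j => f j) ?_ ?_ ?_
    · intro f hf
      rw [Finset.mem_finsuppAntidiag] at hf
      rw [mem_hiSet]
      have hs : ∑ j, f j = d := hf.1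
      refine ⟨fun j => ?_, by omega⟩
      have := Finset.single_le_sum (f := fun j => f j) (fun i _ => Nat.zero_le _) (Finset.mem_univ j)
      omega
    · intro f _ g _ h
      exact DFunLike.ext' h
    · intro c hc
      obtain ⟨h1, h2⟩ := mem_hiSet.1 hc
      refine ⟨Finsupp.equivFunOnFinite.symm c, ?_, by ext j; simp⟩
      rw [Finset.mem_finsuppAntidiag]
      refine ⟨?_, Finset.subset_univ _⟩
      simp
      omega
  · rw [Finset.card_eq_zero, Finset.eq_empty_iff_forall_notMem]
    intro c hc
    have := (mem_hiSet.1 hc).2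
    omega

theorem cSeq_eq (p r m i : ℕ) (hp : p.Prime) (hr : 0 < r) :
    cSeq p r m (i + 2) = (vSet p r m (r * p + 1) (i + 1) (r * p)).card := by
  unfold cSeq
  have hset : ∀ a : Fin m → ℕ, ((∑ j, a j = r * (p ^ (i + 2) - 1)) ∧
      ∀ k, 1 ≤ k → k ≤ i + 2 - 1 → r * (p ^ k - 1) + p ^ k ≤ ∑ j, a j % p ^ k) ↔
      a ∈ vSet p r m (r * p + 1) (i + 1) (r * p) := by
    intro a
    have e1 : ∀ k, r * (p ^ k - 1) + r = r * p ^ k := fun k => by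
      obtain ⟨d, hd⟩ : ∃ d, p ^ k = d + 1 := ⟨p ^ k - 1, by have := pow_pos hp.pos k; omega⟩
      rw [hd, Nat.add_sub_cancel]; ring
    have e2 := e1 (i + 2)
    have e3 : r * p ^ (i + 2) = r * p * p ^ (i + 1) := by ring
    rw [mem_vSet]
    constructor
    · rintro ⟨h1, h2⟩
      refine ⟨fun j => ?_, by omega, fun k hk hk' => ?_⟩
      · have h3 := Finset.single_le_sum (f := fun j => a j) (fun i _ => Nat.zero_le _)
          (Finset.mem_univ j)
        have := pow_pos hp.pos (i + 1)
        rw [mul_add, mul_comm (p ^ (i + 1)) (r * p)]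
        omega
      · have h3 := h2 k hk (by omega)
        have := e1 k
        rw [add_mul, one_mul]
        omega
    · rintro ⟨-, h1, h2⟩
      refine ⟨by omega, fun k hk hk' => ?_⟩
      have h3 := h2 k hk (by omega)
      have := e1 k
      rw [add_mul, one_mul] at h3
      omega
  rw [Nat.card_congr (Equiv.subtypeEquivRight hset)]
  simp

/-- An extremum packet: every value of a bounded-index family lies between the min and max. -/
theorem sInf_le_le_sSup {S : Set ℕ} (hS : S.Finite) {x : ℕ} (hx : x ∈ S) :
    sInf S ≤ x ∧ x ≤ sSup S :=
  ⟨Nat.sInf_le hx, le_csSup hS.bddAbove hx⟩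

theorem U_bounds (p r m i j : ℕ) (hi : i ∈ Finset.Icc 1 (m - r - 1))
    (hj : j ∈ Finset.Icc 1 (m - r - 1)) :
    minU p r m ≤ Mpm p m ((r : ℤ) * (p - 1) + (i : ℤ) * p - (j : ℤ)) ∧
      Mpm p m ((r : ℤ) * (p - 1) + (i : ℤ) * p - (j : ℤ)) ≤ maxU p r m := by
  refine sInf_le_le_sSup ?_ ⟨i, hi, j, hj, rfl⟩
  refine Set.Finite.subset (Finset.finite_toSet
    ((Finset.Icc 1 (m - r - 1) ×ˢ Finset.Icc 1 (m - r - 1)).image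
      (fun x : ℕ × ℕ => Mpm p m ((r : ℤ) * (p - 1) + (x.1 : ℤ) * p - (x.2 : ℤ))))) ?_
  rintro x ⟨i, hi, j, hj, rfl⟩
  exact Finset.mem_coe.2 (Finset.mem_image.2 ⟨(i, j), Finset.mem_product.2 ⟨hi, hj⟩, rfl⟩)

theorem X_bounds (p r m j : ℕ) (hj : j ∈ Finset.Icc 1 (m - r - 1)) :
    minX0 p r m ≤ Mpm p m ((r : ℤ) * (p - 1) + (j : ℤ) * p) ∧
      Mpm p m ((r : ℤ) * (p - 1) + (j : ℤ) * p) ≤ maxX0 p r m := by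
  refine sInf_le_le_sSup ?_ ⟨j, hj, rfl⟩
  refine Set.Finite.subset (Finset.finite_toSet ((Finset.Icc 1 (m - r - 1)).image
      (fun x : ℕ => Mpm p m ((r : ℤ) * (p - 1) + (x : ℤ) * p)))) ?_
  rintro x ⟨j, hj, rfl⟩
  exact Finset.mem_coe.2 (Finset.mem_image.2 ⟨j, hj, rfl⟩)

theorem Y_bounds (p r m j : ℕ) (hj : j ∈ Finset.Icc 1 (m - r - 1)) :
    minY0 p r m ≤ Pm m ((r : ℤ) * (p - 1) - (j : ℤ)) ∧
      Pm m ((r : ℤ) * (p - 1) - (j : ℤ)) ≤ maxY0 p r m := by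
  refine sInf_le_le_sSup ?_ ⟨j, hj, rfl⟩
  refine Set.Finite.subset (Finset.finite_toSet ((Finset.Icc 1 (m - r - 1)).image
      (fun x : ℕ => Pm m ((r : ℤ) * (p - 1) - (x : ℤ))))) ?_
  rintro x ⟨j, hj, rfl⟩
  exact Finset.mem_coe.2 (Finset.mem_image.2 ⟨j, hj, rfl⟩)

theorem sum_bounds (N : ℕ) (f g : ℕ → ℕ) (a A b B : ℕ)
    (hf : ∀ n ∈ Finset.Icc 1 N, a ≤ f n ∧ f n ≤ A)
    (hg : ∀ n ∈ Finset.Icc 1 N, b ≤ g n ∧ g n ≤ B) :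
    N * (a * b) ≤ ∑ n ∈ Finset.Icc 1 N, f n * g n ∧
      ∑ n ∈ Finset.Icc 1 N, f n * g n ≤ N * (A * B) := by
  constructor
  · have := Finset.card_nsmul_le_sum (Finset.Icc 1 N) (fun n => f n * g n) (a * b)
      (fun n hn => Nat.mul_le_mul (hf n hn).1 (hg n hn).1)
    simpa using this
  · have := Finset.sum_le_card_nsmul (Finset.Icc 1 N) (fun n => f n * g n) (A * B)
      (fun n hn => Nat.mul_le_mul (hf n hn).2 (hg n hn).2)
    simpa using this

theorem W_bounds (p r m i : ℕ) (hp : p.Prime) (hr : 0 < r) (hm : r + 2 ≤ m) :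
    ∀ n ∈ Finset.Icc 1 (m - r - 1),
      (m - r - 1) ^ i * minU p r m ^ i * minX0 p r m ≤ (vSet p r m p i (r * p + n * p)).card ∧
      (vSet p r m p i (r * p + n * p)).card ≤
        (m - r - 1) ^ i * maxU p r m ^ i * maxX0 p r m := by
  induction i with
  | zero =>
    intro n hn
    rw [vSet_zero, card_hiSet_p]
    have h := X_bounds p r m n hn
    rw [show (((r * p + n * p : ℕ) : ℤ) - (r : ℤ)) = (r : ℤ) * (p - 1) + (n : ℤ) * p by
      push_cast; ring]
    simpa using h
  | succ i ih =>
    intro n hn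
    rw [vSet_succ p r m p i _ hp hr hm]
    have h := sum_bounds (m - r - 1) (fun n' => (vSet p r m p i (r * p + n' * p)).card)
      (fun n' => (hiSet m p (r + n') (r * p + n * p)).card) _ _ _ _ ih (fun n' hn' => by
        have h := U_bounds p r m n n' hn hn'
        rw [card_hiSet_p, show (((r * p + n * p : ℕ) : ℤ) - ((r + n' : ℕ) : ℤ)) =
          (r : ℤ) * (p - 1) + (n : ℤ) * p - n' by push_cast; ring]
        exact h)
    refine ⟨le_trans (le_of_eq ?_) h.1, le_trans h.2 (le_of_eq ?_)⟩ <;> ring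

/-- the bounds
`(m−r−1)^{e−1}·|Y_0|·|U|^{e−2}·|X_0| ≤ c_{p,r,m,e} ≤ (m−r−1)^{e−1}·‖Y_0‖·‖U‖^{e−2}·‖X_0‖`. -/
theorem stmt_18 (p r m e : ℕ) (hp : p.Prime) (hr : 0 < r) (hm : r + 2 ≤ m)
    (he : 2 ≤ e) :
    (m - r - 1) ^ (e - 1) * minY0 p r m * minU p r m ^ (e - 2) * minX0 p r m ≤
        cSeq p r m e ∧
    cSeq p r m e ≤
        (m - r - 1) ^ (e - 1) * maxY0 p r m * maxU p r m ^ (e - 2) * maxX0 p r m := by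
  obtain ⟨i, rfl⟩ : ∃ i, e = i + 2 := ⟨e - 2, by omega⟩
  rw [cSeq_eq p r m i hp hr, vSet_succ p r m _ i _ hp hr hm]
  have h := sum_bounds (m - r - 1) (fun n' => (vSet p r m p i (r * p + n' * p)).card)
    (fun n' => (hiSet m (r * p + 1) (r + n') (r * p)).card) _ _ _ _
    (W_bounds p r m i hp hr hm) (fun n' hn' => by
      have h := Y_bounds p r m n' hn'
      rw [card_hiSet_big m _ _ _ (by omega) (Nat.lt_succ_self _),
        show (((r * p : ℕ) : ℤ) - ((r + n' : ℕ) : ℤ)) = (r : ℤ) * (p - 1) - n' by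
          push_cast; ring]
      exact h)
  rw [show i + 2 - 1 = i + 1 by omega, show i + 2 - 2 = i by omega]
  refine ⟨le_trans (le_of_eq ?_) h.1, le_trans h.2 (le_of_eq ?_)⟩ <;> ring
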